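/- arXiv:1808.01823 — 6 statements merged into one kernel-verified Lean document; each statement's English description precedes it below -/
import Mathlib

section
/- Let A = M_{n_1}(ℂ) × ⋯ × M_{n_k}(ℂ) with coordinatewise operations, and suppose a = (a_1, …, a_k) ∈ A is a maximal finite-rank element of A, i.e. #σ'(xa) ≤ #σ'(a) for all x ∈ A. Then the nonzero spectra of the components are pairwise disjoint: σ'(a_i) ∩ σ'(a_j) = ∅ whenever i ≠ j. -/
/-- A dilation moving a finite set of nonzero numbers off another finite set. -/
lemma exists_unit_disjoint_image_mul {K : Type*} [Field K] [Infinite K] {S T : Set K}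
    (hS : S.Finite) (hT : T.Finite) (h0 : (0 : K) ∉ S) :
    ∃ c : Kˣ, Disjoint ((fun s => (c : K) * s) '' S) T := by
  obtain ⟨c, hc⟩ := ((hT.image2 (· / ·) hS).union (Set.finite_singleton (0 : K))).exists_notMem
  simp only [Set.mem_union, Set.mem_image2, Set.mem_singleton_iff, not_or, not_exists,
    not_and] at hc
  refine ⟨Units.mk0 c hc.2, Set.disjoint_left.2 ?_⟩
  rintro _ ⟨s, hs, rfl⟩ ht
  have hs0 : s ≠ 0 := fun h => h0 (h ▸ hs)
  exact hc.1 _ ht s hs (by simp [hs0])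

/-- The nonzero spectrum of an element of a product, with one component singled out. -/
lemma spectrum_pi_diff_zero_eq_union {ι K : Type*} [Field K] {B : ι → Type*} [∀ j, Ring (B j)]
    [∀ j, Algebra K (B j)] (b : ∀ j, B j) (i : ι) :
    spectrum K b \ {0} =
      (spectrum K (b i) \ {0}) ∪ ⋃ l ∈ ({i}ᶜ : Set ι), (spectrum K (b l) \ {0}) := by
  ext z
  simp only [Pi.spectrum_eq, Set.mem_sdiff, Set.mem_iUnion, Set.mem_union, Set.mem_compl_iff,
    Set.mem_singleton_iff, exists_prop]
  constructor
  · rintro ⟨⟨l, hl⟩, hz⟩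
    by_cases h : l = i
    · exact Or.inl ⟨h ▸ hl, hz⟩
    · exact Or.inr ⟨l, h, hl, hz⟩
  · rintro (⟨h, hz⟩ | ⟨l, -, h, hz⟩)
    exacts [⟨⟨i, h⟩, hz⟩, ⟨⟨l, h⟩, hz⟩]

/-- Dilating an algebra element dilates its nonzero spectrum. -/
lemma spectrum_unit_smul_diff_zero {K B : Type*} [Field K] [Ring B] [Algebra K B] (c : Kˣ)
    (b : B) :
    spectrum K (c • b) \ {0} = (fun s => (c : K) * s) '' (spectrum K b \ {0}) := by
  rw [spectrum.unit_smul_eq_smul, Set.image_sdiff (mul_right_injective₀ c.ne_zero)]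
  simp [← Set.image_smul, Units.smul_def]

/-- If `a = (a_1, …, a_k)` is a maximal finite-rank element of the product of
matrix algebras `A = M_{n_1}(ℂ) × ⋯ × M_{n_k}(ℂ)`, then the nonzero spectra of the components
are pairwise disjoint. -/
theorem components_disjoint_spectra (k : ℕ) (hk : 0 < k) (n : Fin k → ℕ) (hn : ∀ j, 0 < n j)
    (a : ∀ j, Matrix (Fin (n j)) (Fin (n j)) ℂ)
    (hmax : ∀ x : ∀ j, Matrix (Fin (n j)) (Fin (n j)) ℂ,
      (spectrum ℂ (x * a) \ {0}).encard ≤ (spectrum ℂ a \ {0}).encard)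
    (i j : Fin k) (hij : i ≠ j) :
    (spectrum ℂ (a i) \ {0}) ∩ (spectrum ℂ (a j) \ {0}) = ∅ := by
  have hfin (l : Fin k) : (spectrum ℂ (a l) \ {0}).Finite := (Matrix.finite_spectrum (a l)).sdiff
  set S := spectrum ℂ (a i) \ {0} with hS
  set T := ⋃ l ∈ ({i}ᶜ : Set (Fin k)), (spectrum ℂ (a l) \ {0}) with hT
  have hTfin : T.Finite := (Set.toFinite _).biUnion fun l _ => hfin l
  obtain ⟨c, hc⟩ := exists_unit_disjoint_image_mul (hfin i) hTfin (by simp)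
  let x : ∀ l, Matrix (Fin (n l)) (Fin (n l)) ℂ := Function.update 1 i (c • 1)
  have hx : spectrum ℂ (x * a) \ {0} =
      ((fun s => (c : ℂ) * s) '' S) ∪ T := by
    rw [spectrum_pi_diff_zero_eq_union _ i, hS, ← spectrum_unit_smul_diff_zero, hT]
    congr 1
    · simp [x]
    · refine Set.iUnion₂_congr fun l hl => ?_
      rw [Pi.mul_apply, show x l = 1 from Function.update_of_ne hl _ _, one_mul]
  have hle := hmax x
  rw [hx, spectrum_pi_diff_zero_eq_union a i, ← hS, ← hT, Set.encard_union_eq hc,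
    (mul_right_injective₀ c.ne_zero).encard_image, ← Set.encard_union_add_encard_inter] at hle
  have hinter : (S ∩ T).encard = 0 := by
    have hne : (S ∪ T).encard ≠ ⊤ := ((hfin i).union hTfin).encard_lt_top.ne
    simpa using (ENat.add_le_add_iff_left hne).1 (hle.trans_eq (add_zero _).symm)
  rw [Set.encard_eq_zero] at hinter
  refine Set.subset_empty_iff.1 (hinter ▸ Set.inter_subset_inter_right S ?_)
  exact Set.subset_biUnion_of_mem (u := fun l => spectrum ℂ (a l) \ {0}) hij.symm
end

section
/- Let A = M_{n_1}(ℂ) × ⋯ × M_{n_k}(ℂ) with coordinatewise operations, and suppose a = (a_1, …, a_k) ∈ A is a maximal finite-rank element of A, i.e. #σ'(xa) ≤ #σ'(a) for all x ∈ A. Then for each j ∈ {1, …, k}, the component a_j is a maximal finite-rank element of M_{n_j}(ℂ): #σ'(y a_j) ≤ #σ'(a_j) for every y ∈ M_{n_j}(ℂ). -/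
open scoped Pointwise

/-- The nonzero spectrum scales with a unit of the base field. -/
theorem spectrum_units_smul_diff_zero {A : Type*} [Ring A] [Algebra ℂ A] (r : ℂˣ) (b : A) :
    spectrum ℂ (r • b) \ {0} = r • (spectrum ℂ b \ {0}) := by
  rw [spectrum.unit_smul_eq_smul, Set.smul_set_sdiff, Set.smul_set_singleton, smul_zero]

/-- Two finite sets of nonzero scalars become disjoint after rescaling one of them. -/
theorem exists_units_disjoint_smul {S T : Set ℂ} (hS : S.Finite) (hT : T.Finite)
    (hT0 : (0 : ℂ) ∉ T) : ∃ r : ℂˣ, Disjoint S (r • T) := by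
  obtain ⟨r, hr⟩ := ((hS.div hT).insert 0).exists_notMem
  rw [Set.mem_insert_iff, not_or] at hr
  refine ⟨Units.mk0 r hr.1, Set.disjoint_left.2 ?_⟩
  rintro s hs ⟨t, ht, rfl⟩
  have ht0 : t ≠ 0 := fun h => hT0 (h ▸ ht)
  exact hr.2 ⟨_, hs, t, ht, by simp [ht0]⟩

/-- The nonzero spectrum of an element of a product algebra, with one coordinate singled out. -/
theorem Pi.spectrum_diff_zero_eq_union {ι : Type*} {κ : ι → Type*} [∀ i, Ring (κ i)]
    [∀ i, Algebra ℂ (κ i)] (b : ∀ i, κ i) (j : ι) :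
    spectrum ℂ b \ {0} =
      (⋃ i : {i // i ≠ j}, spectrum ℂ (b i) \ {0}) ∪ (spectrum ℂ (b j) \ {0}) := by
  rw [Pi.spectrum_eq]
  ext z
  simp only [Set.mem_sdiff, Set.mem_iUnion, Set.mem_union, Subtype.exists]
  constructor
  · rintro ⟨⟨i, hi⟩, hz⟩
    by_cases h : i = j
    · subst h
      exact Or.inr ⟨hi, hz⟩
    · exact Or.inl ⟨i, h, hi, hz⟩
  · rintro (⟨i, _, hi, hz⟩ | ⟨hj, hz⟩)
    exacts [⟨⟨i, hi⟩, hz⟩, ⟨⟨j, hj⟩, hz⟩]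


/-- If `a = (a_1, …, a_k)` is a maximal finite-rank element of the product of
matrix algebras `A = M_{n_1}(ℂ) × ⋯ × M_{n_k}(ℂ)`, then each component `a_j` is a maximal
finite-rank element of `M_{n_j}(ℂ)`. -/
theorem components_maximal (k : ℕ) (hk : 0 < k) (n : Fin k → ℕ) (hn : ∀ j, 0 < n j)
    (a : ∀ j, Matrix (Fin (n j)) (Fin (n j)) ℂ)
    (hmax : ∀ x : ∀ j, Matrix (Fin (n j)) (Fin (n j)) ℂ,
      (spectrum ℂ (x * a) \ {0}).encard ≤ (spectrum ℂ a \ {0}).encard)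
    (j : Fin k) (y : Matrix (Fin (n j)) (Fin (n j)) ℂ) :
    (spectrum ℂ (y * a j) \ {0}).encard ≤ (spectrum ℂ (a j) \ {0}).encard := by
  set S : Set ℂ := ⋃ i : {i // i ≠ j}, spectrum ℂ (a i) \ {0} with hSdef
  have hS : S.Finite := Set.finite_iUnion fun i => (Matrix.finite_spectrum (a i)).sdiff
  obtain ⟨r, hr⟩ := exists_units_disjoint_smul hS
    ((Matrix.finite_spectrum (y * a j)).sdiff (t := {0})) (fun h => h.2 rfl)
  let x : ∀ i, Matrix (Fin (n i)) (Fin (n i)) ℂ := Function.update 1 j (r • y)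
  have hx : spectrum ℂ (x * a) \ {0} = S ∪ r • (spectrum ℂ (y * a j) \ {0}) := by
    rw [Pi.spectrum_diff_zero_eq_union _ j, ← spectrum_units_smul_diff_zero, hSdef]
    congr 1
    · refine Set.iUnion_congr fun i => ?_
      simp [x, Function.update_of_ne i.2]
    · simp [x]
  have hcard : (r • (spectrum ℂ (y * a j) \ {0})).encard
      = (spectrum ℂ (y * a j) \ {0}).encard :=
    (MulAction.injective r).encard_image _
  rw [← ENat.add_le_add_iff_left hS.encard_lt_top.ne]
  calc S.encard + (spectrum ℂ (y * a j) \ {0}).encard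
      = (spectrum ℂ (x * a) \ {0}).encard := by rw [hx, Set.encard_union_eq hr, hcard]
    _ ≤ (spectrum ℂ a \ {0}).encard := hmax x
    _ ≤ S.encard + (spectrum ℂ (a j) \ {0}).encard := by
      rw [Pi.spectrum_diff_zero_eq_union a j]
      exact Set.encard_union_le _ _
end

section
/- Let A = M_{n_1}(ℂ) × ⋯ × M_{n_k}(ℂ) with coordinatewise operations, and suppose a = (a_1, …, a_k) ∈ A is invertible and is a maximal finite-rank element of A, i.e. #σ'(xa) ≤ #σ'(a) for all x ∈ A. Then every spectral value of a has spectral multiplicity one, and for all λ ∈ ℂ the generalized characteristic polynomial of a satisfies ∏_{α ∈ σ(a)} (α − λ) = ∏_{j=1}^k det(a_j − λ·I_{n_j}), where det denotes the classical determinant and I_{n_j} is the n_j × n_j identity matrix. -/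
open Polynomial in
/-- The spectrum of a tuple of matrices is the root set of the product of the
characteristic polynomials of its entries. -/
theorem spectrum_pi_matrix_eq_roots_prod_charpoly {ι K : Type*} [Fintype ι] [Field K]
    {m : ι → Type*} [∀ j, Fintype (m j)] [∀ j, DecidableEq (m j)] [DecidableEq K]
    (a : ∀ j, Matrix (m j) (m j) K) :
    spectrum K a = ((∏ j, (a j).charpoly).roots.toFinset : Set K) := by
  have hne : ∏ j, (a j).charpoly ≠ 0 :=
    (monic_prod_of_monic _ _ fun j _ => (a j).charpoly_monic).ne_zero
  ext μ
  simp [Pi.spectrum_eq, Matrix.mem_spectrum_iff_isRoot_charpoly, mem_roots hne,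
    IsRoot.def, eval_prod, Finset.prod_eq_zero_iff, -mem_roots']

/-- The product of matrix algebras of total size `∑ j, n j` over a field of characteristic zero
contains a tuple with at least that many distinct nonzero spectral values. -/
theorem exists_sum_le_encard_spectrum_diff_zero {k : ℕ} (K : Type*) [Field K] [CharZero K]
    (n : Fin k → ℕ) :
    ∃ d : ∀ j, Matrix (Fin (n j)) (Fin (n j)) K,
      ((∑ j, n j : ℕ) : ℕ∞) ≤ (spectrum K d \ {0}).encard := by
  let e : Fin (∑ j, n j) → K := fun i => ((i : ℕ) : K) + 1
  have he : Function.Injective e := fun i i' h => by simpa [e, Fin.ext_iff] using h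
  refine ⟨fun j => Matrix.diagonal fun i => e (finSigmaFinEquiv ⟨j, i⟩), ?_⟩
  have hsub : Set.range e ⊆ spectrum K (fun j => Matrix.diagonal
      fun i : Fin (n j) => e (finSigmaFinEquiv ⟨j, i⟩)) \ {0} := by
    rintro _ ⟨i, rfl⟩
    refine ⟨?_, Nat.cast_add_one_ne_zero (i : ℕ)⟩
    rw [Pi.spectrum_eq, Set.mem_iUnion]
    refine ⟨(finSigmaFinEquiv.symm i).1, ?_⟩
    rw [spectrum_diagonal]
    exact ⟨(finSigmaFinEquiv.symm i).2, by simp⟩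
  calc ((∑ j, n j : ℕ) : ℕ∞) = (Set.range e).encard := by
        rw [← Set.image_univ, he.encard_image]; simp
    _ ≤ _ := Set.encard_le_encard hsub

/-- If `a = (a_1, …, a_k)` is an invertible maximal finite-rank element of the
product of matrix algebras `A = M_{n_1}(ℂ) × ⋯ × M_{n_k}(ℂ)`, then every spectral value of
`a` has spectral multiplicity one (equivalently, `a` has `n_1 + ⋯ + n_k` distinct spectral
values), and the generalized characteristic polynomial of `a` satisfies
`∏_{α ∈ σ(a)} (α − λ) = ∏_j det(a_j − λ·I)` for all `λ ∈ ℂ`. -/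
theorem char_poly_eq_prod_det (k : ℕ) (hk : 0 < k) (n : Fin k → ℕ) (hn : ∀ j, 0 < n j)
    (a : ∀ j, Matrix (Fin (n j)) (Fin (n j)) ℂ) (ha : IsUnit a)
    (hmax : ∀ x : ∀ j, Matrix (Fin (n j)) (Fin (n j)) ℂ,
      (spectrum ℂ (x * a) \ {0}).encard ≤ (spectrum ℂ a \ {0}).encard) :
    (spectrum ℂ a).encard = ((∑ j, n j : ℕ) : ℕ∞) ∧
      ∀ μ : ℂ, (∏ᶠ α ∈ spectrum ℂ a, (α - μ)) =
        ∏ j, Matrix.det (a j - μ • (1 : Matrix (Fin (n j)) (Fin (n j)) ℂ)) := by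
  set P := ∏ j, (a j).charpoly with hP
  have hmonic : P.Monic :=
    Polynomial.monic_prod_of_monic _ _ fun j _ => (a j).charpoly_monic
  have hdeg : P.natDegree = ∑ j, n j := by
    rw [hP, Polynomial.natDegree_prod_of_monic _ _ fun j _ => (a j).charpoly_monic]
    simp
  have hsplits : P.Splits := IsAlgClosed.splits P
  have hcard : P.roots.card = ∑ j, n j := by
    rw [← hdeg, hsplits.natDegree_eq_card_roots]
  have hspec : spectrum ℂ a = (P.roots.toFinset : Set ℂ) :=
    spectrum_pi_matrix_eq_roots_prod_charpoly a
  have hlower : ((∑ j, n j : ℕ) : ℕ∞) ≤ (spectrum ℂ a).encard := by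
    obtain ⟨d, hd⟩ := exists_sum_le_encard_spectrum_diff_zero ℂ n
    obtain ⟨u, rfl⟩ := ha
    have hx := hmax (d * ↑u⁻¹)
    rw [mul_assoc, Units.inv_mul, mul_one] at hx
    exact hd.trans (hx.trans (Set.encard_le_encard Set.sdiff_subset))
  rw [hspec, Set.encard_coe_eq_coe_finsetCard, Nat.cast_le] at hlower
  have hcard_eq : P.roots.toFinset.card = P.roots.card :=
    le_antisymm (Multiset.toFinset_card_le _) (hcard ▸ hlower)
  have hnodup : P.roots.Nodup := Multiset.toFinset_card_eq_card_iff_nodup.mp hcard_eq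
  refine ⟨by rw [hspec, Set.encard_coe_eq_coe_finsetCard, hcard_eq, hcard], fun μ => ?_⟩
  have heval : P.eval μ = ∏ α ∈ P.roots.toFinset, (μ - α) := by
    conv_lhs => rw [hsplits.eq_prod_roots_of_monic hmonic]
    rw [Polynomial.eval_multiset_prod, Finset.prod, Multiset.toFinset_val, hnodup.dedup]
    simp
  calc ∏ᶠ α ∈ spectrum ℂ a, (α - μ) = ∏ α ∈ P.roots.toFinset, (α - μ) := by
        rw [hspec, finprod_mem_coe_finset]
    _ = (-1) ^ (∑ j, n j) * P.eval μ := by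
        rw [heval, ← hcard, ← hcard_eq, ← Finset.prod_const, ← Finset.prod_mul_distrib]
        simp
    _ = ∏ j, Matrix.det (a j - μ • (1 : Matrix (Fin (n j)) (Fin (n j)) ℂ)) := by
        rw [hP, Polynomial.eval_prod, ← Finset.prod_pow_eq_pow_sum, ← Finset.prod_mul_distrib]
        refine Finset.prod_congr rfl fun j _ => ?_
        rw [Matrix.eval_charpoly, ← neg_sub, Matrix.det_neg, Fintype.card_fin,
          Matrix.smul_one_eq_diagonal, Matrix.scalar_apply, ← mul_assoc, ← mul_pow]
        simp
end

section
/- Let A be a semisimple complex unital Banach algebra with identity 1, and let a ∈ A be a maximal finite-rank element, i.e. σ'(a) is finite and #σ'(xa) ≤ #σ'(a) for all x ∈ A. Then a · ∏_{α ∈ σ'(a)} (a − α·1) = 0. (This is the Generalized Cayley–Hamilton Theorem p_a(a) = 0 for maximal finite-rank elements, whose nonzero spectral values all have spectral multiplicity one.) -/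
open Topology in
/-- If the spectrum of `a` is finite, then `a - μ` is left invertible only if it is invertible. -/
theorem isUnit_of_mul_eq_one_of_finite_spectrum {A : Type*} [NormedRing A] [NormedAlgebra ℂ A]
    [CompleteSpace A] {a b : A} {μ : ℂ} (hfin : (spectrum ℂ a).Finite)
    (hb : b * (a - algebraMap ℂ A μ) = 1) : IsUnit (a - algebraMap ℂ A μ) := by
  have hne : ∀ᶠ z in 𝓝[≠] μ, z ∉ spectrum ℂ a := by
    have h : (spectrum ℂ a \ {μ})ᶜ ∈ 𝓝 μ :=
      (hfin.subset Set.sdiff_subset).isClosed.isOpen_compl.mem_nhds (by simp)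
    filter_upwards [nhdsWithin_le_nhds h, self_mem_nhdsWithin] with z hz hzμ hzs
    exact hz ⟨hzs, hzμ⟩
  have hunit : ∀ᶠ z in 𝓝[≠] μ, IsUnit (b * (a - algebraMap ℂ A z)) := by
    have hcont : Continuous fun z : ℂ => b * (a - algebraMap ℂ A z) := by
      have := continuous_algebraMap ℂ A
      fun_prop
    exact nhdsWithin_le_nhds <| hcont.continuousAt.preimage_mem_nhds
      (Units.isOpen.mem_nhds (by simp [hb]))
  obtain ⟨z, hz, hbz⟩ := (hne.and hunit).exists
  have haz : IsUnit (a - algebraMap ℂ A z) := by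
    rw [spectrum.notMem_iff] at hz
    simpa using hz.neg
  have hbu : IsUnit b := by
    obtain ⟨u, hu⟩ := haz
    rw [← hu] at hbz
    simpa using hbz
  exact (hbu.mul_left_iff (b := a - algebraMap ℂ A μ)).mp (by simp [hb])

open Polynomial in
/-- Generalized Cayley–Hamilton for maximal finite-rank elements: if `a` is a
maximal finite-rank element of a semisimple complex unital Banach algebra, then
`a · ∏_{α ∈ σ'(a)} (a − α·1) = 0`. -/
theorem cayley_hamilton_maximal {A : Type*} [NormedRing A] [NormedAlgebra ℂ A]
    [CompleteSpace A] (hss : (⊥ : Ideal A).jacobson = ⊥) (a : A)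
    (hfin : (spectrum ℂ a \ {0}).Finite)
    (hmax : ∀ x : A, (spectrum ℂ (x * a) \ {0}).encard ≤ (spectrum ℂ a \ {0}).encard) :
    Polynomial.aeval a
      (Polynomial.X * ∏ α ∈ hfin.toFinset, (Polynomial.X - Polynomial.C α)) = 0 := by
  set q : ℂ[X] := ∏ α ∈ hfin.toFinset, (X - C α)
  have hfin' : (spectrum ℂ a).Finite :=
    (hfin.union (Set.finite_singleton 0)).subset (Set.subset_sdiff_union _ _)
  by_contra hp
  obtain ⟨L, hL, hpL⟩ : ∃ L : Ideal A, L.IsMaximal ∧ aeval a (X * q) ∉ L := by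
    by_contra! h
    refine hp ((Submodule.mem_bot A).mp (hss ▸ ?_))
    exact Ideal.mem_sInf.mpr fun {J} hJ => h J hJ.2
  obtain ⟨l, hl⟩ := (hfin'.union (Set.finite_singleton 0)).exists_notMem
  -- Modulo `L`, the element `a + b * p(a)` acts as the scalar `l`.
  obtain ⟨b, hb⟩ : ∃ b : A, a + b * aeval a (X * q) - algebraMap ℂ A l ∈ L := by
    obtain ⟨y, i, hi, hyi⟩ := hL.exists_inv hpL
    refine ⟨(algebraMap ℂ A l - a) * y, ?_⟩
    have h : a + (algebraMap ℂ A l - a) * y * aeval a (X * q) - algebraMap ℂ A l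
        = -((algebraMap ℂ A l - a) * i) := by
      rw [mul_assoc, eq_sub_of_add_eq hyi]
      noncomm_ring
    rw [h]
    exact L.neg_mem (L.mul_mem_left _ hi)
  have hxa : (1 + b * aeval a q) * a = a + b * aeval a (X * q) := by
    rw [mul_comm X q, map_mul, aeval_X]
    noncomm_ring
  have hsub : insert l (spectrum ℂ a \ {0}) ⊆ spectrum ℂ ((1 + b * aeval a q) * a) \ {0} := by
    rw [hxa]
    rintro m (rfl | hm)
    · refine ⟨fun hunit => hL.ne_top (L.eq_top_of_isUnit_mem hb ?_), fun h => hl (Or.inr h)⟩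
      simpa using hunit.neg
    · refine ⟨fun hunit => hm.1 ?_, hm.2⟩
      obtain ⟨r, hr⟩ : X - C m ∣ X * q :=
        (Finset.dvd_prod_of_mem (fun α => X - C α) (hfin.mem_toFinset.mpr hm)).mul_left X
      have hfactor : algebraMap ℂ A m - (a + b * aeval a (X * q))
          = -(1 + b * aeval a r) * (a - algebraMap ℂ A m) := by
        rw [hr, mul_comm (X - C m) r, map_mul, map_sub, aeval_X, aeval_C]
        noncomm_ring
      obtain ⟨y, hy⟩ := hunit.exists_left_inv
      rw [hfactor, ← mul_assoc] at hy
      simpa [spectrum.mem_resolventSet_iff] using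
        (isUnit_of_mul_eq_one_of_finite_spectrum hfin' hy).neg
  have hcard := (Set.encard_le_encard hsub).trans (hmax _)
  rw [Set.encard_insert_of_notMem (fun h => hl (Or.inl h.1))] at hcard
  exact absurd hcard (not_le.mpr (ENat.lt_add_one_iff hfin.encard_lt_top.ne |>.mpr le_rfl))
end

section
/- Let A = M_{n_1}(ℂ) × ⋯ × M_{n_k}(ℂ) with coordinatewise operations, and suppose a ∈ A is invertible and is a maximal finite-rank element of A, i.e. #σ'(xa) ≤ #σ'(a) for all x ∈ A. Then ∏_{α ∈ σ(a)} (a − α·1) = 0, where 1 denotes the identity of A. (This is the Generalized Cayley–Hamilton Theorem for an invertible maximal finite-rank element of a finite-dimensional semisimple algebra, where the generalized characteristic polynomial has only simple roots.) -/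
open Polynomial in
/-- A monic polynomial with at least as many distinct roots as its degree is the product of the
corresponding linear factors. -/
theorem Polynomial.Monic.finprod_X_sub_C_rootSet_eq {K : Type*} [Field K] {p : K[X]}
    (hp : p.Monic) (hcard : (p.natDegree : ℕ∞) ≤ {x | p.IsRoot x}.encard) :
    ∏ᶠ x ∈ {x | p.IsRoot x}, (X - C x) = p := by
  classical
  have hset : {x | p.IsRoot x} = (p.roots.toFinset : Set K) := by
    ext x
    simp [mem_roots hp.ne_zero]
  rw [hset, Set.encard_coe_eq_coe_finsetCard, Nat.cast_le] at hcard
  have hle : p.roots.toFinset.card ≤ p.roots.card := p.roots.toFinset_card_le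
  have hroots : p.roots.card = p.natDegree := p.card_roots'.antisymm (hcard.trans hle)
  have hnodup : p.roots.Nodup :=
    Multiset.toFinset_card_eq_card_iff_nodup.mp (hle.antisymm (hroots.trans_le hcard))
  rw [hset, finprod_mem_coe_finset, Finset.prod_eq_multiset_prod, Multiset.toFinset_val,
    hnodup.dedup, prod_multiset_X_sub_C_of_monic_of_roots_card_eq hp hroots]

section PiMatrix

variable {ι : Type*} [Fintype ι] {m : ι → Type*} [∀ j, Fintype (m j)] [∀ j, DecidableEq (m j)]

/-- The spectrum of a tuple of matrices is the set of roots of the product of the characteristic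
polynomials. -/
theorem Matrix.spectrum_pi_eq_setOf_isRoot {K : Type*} [Field K] (a : ∀ j, Matrix (m j) (m j) K) :
    spectrum K a = {x | (∏ j, (a j).charpoly).IsRoot x} := by
  ext x
  simp [Pi.spectrum_eq, Matrix.mem_spectrum_iff_isRoot_charpoly, Polynomial.IsRoot.def,
    Polynomial.eval_prod, Finset.prod_eq_zero_iff]

/-- Some tuple of complex matrices has as many distinct nonzero spectral values as the sum of the
sizes of the matrices. -/
theorem Matrix.exists_encard_spectrum_pi_diff_zero_eq :
    ∃ d : ∀ j, Matrix (m j) (m j) ℂ,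
      (spectrum ℂ d \ {0}).encard = (∑ j, Fintype.card (m j) : ℕ) := by
  let e := Fintype.equivFin (Σ j, m j)
  let f : (Σ j, m j) → ℂ := fun s => ((e s : ℕ) : ℂ) + 1
  have hf : Function.Injective f := fun s t h =>
    e.injective (Fin.ext (Nat.cast_injective (R := ℂ) (add_right_cancel h)))
  have hf0 : ∀ s, f s ≠ 0 := fun s => Nat.cast_add_one_ne_zero _
  refine ⟨fun j => Matrix.diagonal fun i => f ⟨j, i⟩, ?_⟩
  have hspec : spectrum ℂ (fun j => Matrix.diagonal fun i => f ⟨j, i⟩ :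
      ∀ j, Matrix (m j) (m j) ℂ) \ {0} = Set.range f := by
    ext x
    simp only [Pi.spectrum_eq, spectrum_diagonal, Set.mem_sdiff, Set.mem_iUnion,
      Set.mem_range, Set.mem_singleton_iff, Sigma.exists, and_iff_left_iff_imp]
    rintro ⟨j, i, rfl⟩
    exact hf0 _
  rw [hspec, ← Set.image_univ, hf.encard_image, Set.encard_univ, ENat.card_eq_coe_fintype_card,
    Fintype.card_sigma]

end PiMatrix


/-- Generalized Cayley–Hamilton for an invertible maximal finite-rank element
of a product of matrix algebras: `∏_{α ∈ σ(a)} (a − α·1) = 0`. -/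
theorem cayley_hamilton_product (k : ℕ) (hk : 0 < k) (n : Fin k → ℕ) (hn : ∀ j, 0 < n j)
    (a : ∀ j, Matrix (Fin (n j)) (Fin (n j)) ℂ) (ha : IsUnit a)
    (hmax : ∀ x : ∀ j, Matrix (Fin (n j)) (Fin (n j)) ℂ,
      (spectrum ℂ (x * a) \ {0}).encard ≤ (spectrum ℂ a \ {0}).encard) :
    Polynomial.aeval a (∏ᶠ α ∈ spectrum ℂ a, (Polynomial.X - Polynomial.C α)) = 0 := by
  have hmonic : (∏ j, (a j).charpoly).Monic :=
    Polynomial.monic_prod_of_monic _ _ fun j _ => (a j).charpoly_monic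
  have hdeg : (∏ j, (a j).charpoly).natDegree = ∑ j, Fintype.card (Fin (n j)) := by
    rw [Polynomial.natDegree_prod_of_monic _ _ fun j _ => (a j).charpoly_monic]
    simp [Matrix.charpoly_natDegree_eq_dim]
  have hcard : ((∏ j, (a j).charpoly).natDegree : ℕ∞) ≤
      {x | (∏ j, (a j).charpoly).IsRoot x}.encard := by
    obtain ⟨d, hd⟩ := Matrix.exists_encard_spectrum_pi_diff_zero_eq (m := fun j => Fin (n j))
    obtain ⟨u, rfl⟩ := ha
    have h := hmax (d * ↑u⁻¹)
    rw [mul_assoc, Units.inv_mul, mul_one, hd, ← hdeg] at h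
    rw [← Matrix.spectrum_pi_eq_setOf_isRoot]
    exact h.trans (Set.encard_le_encard Set.sdiff_subset)
  rw [Matrix.spectrum_pi_eq_setOf_isRoot, hmonic.finprod_X_sub_C_rootSet_eq hcard,
    Polynomial.aeval_pi_apply]
  funext j
  exact Polynomial.aeval_eq_zero_of_dvd_aeval_eq_zero
    (Finset.dvd_prod_of_mem (fun j => (a j).charpoly) (Finset.mem_univ j))
    (a j).aeval_self_charpoly
end

section
/- Let A be a semisimple complex unital Banach algebra and let p_1, …, p_n ∈ A be pairwise orthogonal idempotents (p_i² = p_i and p_i p_j = 0 for i ≠ j) each of rank one, i.e. sup_{x ∈ A} #σ'(x p_i) = 1 for each i. Then e = p_1 + ⋯ + p_n is an idempotent of finite rank at most n: sup_{x ∈ A} #σ'(xe) ≤ n. -/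
theorem Ideal.mem_span_singleton_iff_mul_eq_self {R : Type*} [Ring R] {e z : R}
    (he : e * e = e) : z ∈ Ideal.span {e} ↔ z * e = z := by
  rw [Ideal.mem_span_singleton']
  constructor
  · rintro ⟨a, rfl⟩
    rw [mul_assoc, he]
  · exact fun h ↦ ⟨z, h⟩

/-- In a semisimple complex algebra, a nonzero element `z` of the left ideal `A p` generated by a
rank-one idempotent `p` generates that ideal. -/
theorem exists_mul_eq_of_rank_le_one {A : Type*} [Ring A] [Algebra ℂ A]
    (hss : (⊥ : Ideal A).jacobson = ⊥) {p : A} (hp : p * p = p)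
    (hrk : ∀ x : A, (spectrum ℂ (x * p) \ {0}).encard ≤ 1)
    {z : A} (hzp : z * p = z) (hz : z ≠ 0) : ∃ a : A, a * z = p := by
  have hzJ : z ∉ (⊥ : Ideal A).jacobson := by rwa [hss, Submodule.mem_bot]
  rw [Ideal.mem_jacobson_iff] at hzJ
  push Not at hzJ
  obtain ⟨b, hb⟩ := hzJ
  -- `-1` is a spectral value of `w := p * b * z`
  have hbz : (-1 : ℂ) ∈ spectrum ℂ (b * z) := by
    rw [spectrum.mem_iff]
    intro hu
    obtain ⟨v, hv⟩ := hu.exists_left_inv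
    refine hb (-v) ?_
    rw [Submodule.mem_bot, ← sub_eq_zero.mpr hv]
    simp only [map_neg, map_one]
    noncomm_ring
  have hw : (-1 : ℂ) ∈ spectrum ℂ (p * (b * z)) := by
    have h : (-1 : ℂ) ∈ spectrum ℂ (b * z * p) \ {0} := by
      rw [mul_assoc, hzp]
      exact ⟨hbz, by simp⟩
    rw [spectrum.nonzero_mul_comm] at h
    exact h.1
  set w := p * (b * z) with hw_def
  have hwp : w * p = w := by rw [hw_def, mul_assoc, mul_assoc, hzp]
  -- hence `-2` is a spectral value of `w - p = (w - 1) * p`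
  have h2 : (-2 : ℂ) ∈ spectrum ℂ ((w - 1) * p) := by
    rw [spectrum.mem_iff] at hw ⊢
    refine fun hu ↦ hw ?_
    have hfac : algebraMap ℂ A (-2) - (w - 1) * p = (algebraMap ℂ A (-1) - w) * (2 - p) := by
      simp only [map_neg, map_one, map_ofNat, sub_mul, mul_sub, neg_mul, one_mul, hwp,
        ← one_add_one_eq_two (R := A), mul_add, mul_one]
      abel
    have hunit : IsUnit (2 - p) := by
      have htwo : IsUnit (2 : A) := by
        simpa only [map_ofNat] using (IsUnit.mk0 (2 : ℂ) two_ne_zero).map (algebraMap ℂ A)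
      have h₁ : (2 - p) * (1 + p) = 2 := by
        simp only [sub_mul, mul_add, mul_one, hp, two_mul]
        abel
      have h₂ : (1 + p) * (2 - p) = 2 := by
        simp only [mul_sub, add_mul, mul_add, one_mul, mul_one, hp,
          ← one_add_one_eq_two (R := A)]
        abel
      have hc : Commute (2 - p) (1 + p) := h₁.trans h₂.symm
      exact (hc.isUnit_mul_iff.mp (by rwa [h₁])).1
    obtain ⟨u, hu'⟩ := hunit
    rw [hfac, ← hu'] at hu
    exact (Units.isUnit_mul_units _ u).mp hu
  have h1 : (-1 : ℂ) ∉ spectrum ℂ ((w - 1) * p) := by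
    intro h1
    have := Set.encard_le_one_iff.mp (hrk (w - 1)) (-1) (-2) ⟨h1, by simp⟩ ⟨h2, by simp⟩
    norm_num at this
  rw [spectrum.notMem_iff] at h1
  obtain ⟨v, hv⟩ := h1.exists_left_inv
  have hvw : v * w = -p := by
    have h := congrArg (· * p) hv
    have h' : (algebraMap ℂ A (-1) - (w - 1) * p) * p = -w := by
      simp only [map_neg, map_one, sub_mul, neg_mul, one_mul, hp, hwp]
      noncomm_ring
    simp only [one_mul, mul_assoc, h'] at h
    rw [← h, mul_neg, neg_neg]
  refine ⟨-v * p * b, ?_⟩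
  rw [mul_assoc, mul_assoc, ← hw_def, neg_mul, hvw, neg_neg]

theorem length_span_singleton_le_one {A : Type*} [Ring A] [Algebra ℂ A]
    (hss : (⊥ : Ideal A).jacobson = ⊥) {p : A} (hp : p * p = p)
    (hrk : ∀ x : A, (spectrum ℂ (x * p) \ {0}).encard ≤ 1) :
    Module.length A (Ideal.span {p}) ≤ 1 := by
  rcases subsingleton_or_nontrivial (Ideal.span {p}) with _ | _
  · simp [Module.length_eq_zero]
  · refine (Module.length_eq_one_iff.mpr
      (isSimpleModule_iff_toSpanSingleton_surjective.mpr ⟨‹_›, ?_⟩)).le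
    rintro ⟨z, hz⟩ hz0 ⟨y, hy⟩
    rw [Ideal.mem_span_singleton_iff_mul_eq_self hp] at hz hy
    obtain ⟨a, ha⟩ := exists_mul_eq_of_rank_le_one hss hp hrk hz (by simpa using hz0)
    exact ⟨y * a, Subtype.ext (by simp [mul_assoc, ha, hy])⟩

/-- A left ideal generated by an idempotent sum embeds into the product of the left ideals
generated by the summands. -/
theorem length_span_sum_le {R ι : Type*} [Ring R] [Fintype ι] (p : ι → R)
    (he : (∑ i, p i) * (∑ i, p i) = ∑ i, p i) :
    Module.length R (Ideal.span {∑ i, p i}) ≤ ∑ i, Module.length R (Ideal.span {p i}) := by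
  rw [← Module.length_pi_of_fintype]
  let f : Ideal.span {∑ i, p i} →ₗ[R] Π i, Ideal.span {p i} :=
    LinearMap.pi fun i ↦
      ((LinearMap.toSpanSingleton R R (p i)).codRestrict (Ideal.span {p i})
        fun a ↦ Ideal.mul_mem_left _ a (Ideal.mem_span_singleton_self _)) ∘ₗ Submodule.subtype _
  refine Module.length_le_of_injective f ((injective_iff_map_eq_zero f).mpr ?_)
  rintro ⟨z, hz⟩ h
  rw [Ideal.mem_span_singleton_iff_mul_eq_self he] at hz
  have hzero (i : ι) : z * p i = 0 := congrArg Subtype.val (congrFun h i)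
  refine Subtype.ext ?_
  change z = 0
  rw [← hz, Finset.mul_sum]
  simp [hzero]

/-- If the left ideal `A e` has finite length, then every nonzero spectral value of `x * e` is an
eigenvalue of right multiplication by `x * e`. -/
theorem exists_mul_eq_smul_of_mem_spectrum {A : Type*} [Ring A] [Algebra ℂ A] {e : A}
    (he : e * e = e) [IsArtinian A (Ideal.span {e})] {x : A} {c : ℂ} (hc : c ≠ 0)
    (hmem : c ∈ spectrum ℂ (x * e)) : ∃ z : A, z ≠ 0 ∧ z * (x * e) = c • z := by
  by_contra! hne
  have hinj (z : A) (hz : z * (algebraMap ℂ A c - x * e) = 0) : z = 0 := by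
    by_contra hz0
    refine hne z hz0 ?_
    rw [mul_sub, sub_eq_zero] at hz
    rw [← hz, Algebra.smul_def, Algebra.commutes]
  let f : Ideal.span {e} →ₗ[A] Ideal.span {e} :=
    (LinearMap.toSpanSingleton A A (algebraMap ℂ A c - x * e)).restrict fun z hz ↦ by
      rw [Ideal.mem_span_singleton_iff_mul_eq_self he] at hz ⊢
      simp only [LinearMap.toSpanSingleton_apply, smul_eq_mul, mul_sub, sub_mul, mul_assoc, he,
        Algebra.commutes c e]
      rw [← mul_assoc z e, hz]
  have hf : Function.Injective f := (injective_iff_map_eq_zero f).mpr fun z hz ↦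
    Subtype.ext (hinj z (congrArg Subtype.val hz))
  obtain ⟨⟨v, hv⟩, hvx⟩ := IsArtinian.surjective_of_injective_endomorphism f hf
    ⟨x * e, Ideal.mul_mem_left _ x (Ideal.mem_span_singleton_self e)⟩
  replace hvx : v * (algebraMap ℂ A c - x * e) = x * e := congrArg Subtype.val hvx
  have hleft : (c⁻¹ • (1 + v)) * (algebraMap ℂ A c - x * e) = 1 := by
    rw [smul_mul_assoc, add_mul, hvx, one_mul, sub_add_cancel, Algebra.algebraMap_eq_smul_one,
      inv_smul_smul₀ hc]
  have hright : (algebraMap ℂ A c - x * e) * (c⁻¹ • (1 + v)) = 1 := by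
    refine sub_eq_zero.mp (hinj _ ?_)
    rw [sub_mul, mul_assoc, hleft, mul_one, one_mul, sub_self]
  exact hmem ⟨⟨_, _, hright, hleft⟩, rfl⟩

/-- The rank of an idempotent `e` is at most the length of the left ideal `A e`. -/
theorem encard_spectrum_le_length {A : Type*} [Ring A] [Algebra ℂ A] {e : A}
    (he : e * e = e) (x : A) :
    (spectrum ℂ (x * e) \ {0}).encard ≤ Module.length A (Ideal.span {e}) := by
  by_cases htop : Module.length A (Ideal.span {e}) = ⊤
  · simp [htop]
  have := (isFiniteLength_iff_isNoetherian_isArtinian.mp (Module.length_ne_top_iff.mp htop)).2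
  refine ENat.forall_natCast_le_iff_le.mp fun n hn ↦ ?_
  obtain ⟨t, hts, htn⟩ := Set.exists_subset_encard_eq hn
  have : Fintype t := (Set.finite_of_encard_eq_coe htn).fintype
  let M (c : ℂ) : Submodule A A :=
    LinearMap.ker (LinearMap.toSpanSingleton A A (x * e - algebraMap ℂ A c))
  have hM {c : ℂ} {z : A} : z ∈ M c ↔ z * (x * e) = c • z := by
    simp [M, mul_sub, sub_eq_zero, Algebra.smul_def, Algebra.commutes]
  have hMe (c : t) : M c ≤ Ideal.span {e} := fun z hz ↦ by
    have hc : (c : ℂ) ≠ 0 := (hts c.2).2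
    rw [← inv_smul_smul₀ hc z, ← hM.mp hz, ← smul_mul_assoc, ← mul_assoc]
    exact Ideal.mul_mem_left _ _ (Ideal.mem_span_singleton_self e)
  let f : (Π c : t, M c) →ₗ[A] Ideal.span {e} :=
    ∑ c : t, Submodule.inclusion (hMe c) ∘ₗ LinearMap.proj c
  have hf : Function.Injective f := (injective_iff_map_eq_zero f).mpr fun g hg ↦ by
    have hind := (Module.End.eigenspaces_iSupIndep (LinearMap.mulRight ℂ (x * e))).comp
      (Subtype.val_injective (p := (· ∈ t)))
    have hsum : ∑ c : t, (g c : A) = 0 := by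
      simpa [f] using congrArg Subtype.val hg
    have hzero := (iSupIndep_iff_finsetSum_eq_zero_imp_eq_zero _).mp hind Finset.univ
      (fun c ↦ (g c : A)) (fun c _ ↦ Module.End.mem_eigenspace_iff.mpr (hM.mp (g c).2)) hsum
    exact funext fun c ↦ Subtype.ext (hzero c (Finset.mem_univ c))
  calc (n : ℕ∞) = ∑ _c : t, 1 := by simp [← htn]
    _ ≤ ∑ c : t, Module.length A (M c) := Finset.sum_le_sum fun c _ ↦ by
        obtain ⟨z, hz, hzc⟩ := exists_mul_eq_smul_of_mem_spectrum he (hts c.2).2 (hts c.2).1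
        have : Nontrivial (M c) := ⟨⟨⟨z, hM.mpr hzc⟩, 0, fun h ↦ hz (congrArg Subtype.val h)⟩⟩
        exact Order.one_le_iff_pos.mpr Module.length_pos
    _ = Module.length A (Π c : t, M c) := (Module.length_pi_of_fintype A _).symm
    _ ≤ _ := Module.length_le_of_injective f hf

/-- A sum of pairwise orthogonal rank-one idempotents of a semisimple complex
unital Banach algebra is an idempotent of rank at most `n`. -/
theorem sum_orthogonal_rank_one {A : Type*} [NormedRing A] [NormedAlgebra ℂ A]
    [CompleteSpace A] (hss : (⊥ : Ideal A).jacobson = ⊥) (N : ℕ) (p : Fin N → A)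
    (hidem : ∀ i, p i * p i = p i) (horth : ∀ i j, i ≠ j → p i * p j = 0)
    (hrk : ∀ i, (⨆ x : A, (spectrum ℂ (x * p i) \ {0}).encard) = 1) :
    (∑ i, p i) * (∑ i, p i) = ∑ i, p i ∧
      (⨆ x : A, (spectrum ℂ (x * (∑ i, p i)) \ {0}).encard) ≤ (N : ℕ∞) := by
  have he : (∑ i, p i) * (∑ i, p i) = ∑ i, p i := by
    rw [Finset.sum_mul_sum]
    refine Finset.sum_congr rfl fun i _ ↦ ?_
    rw [Finset.sum_eq_single i (fun j _ hj ↦ horth i j hj.symm) (by simp), hidem]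
  refine ⟨he, iSup_le fun x ↦ ?_⟩
  calc _ ≤ Module.length A (Ideal.span {∑ i, p i}) := encard_spectrum_le_length he x
    _ ≤ ∑ i, Module.length A (Ideal.span {p i}) := length_span_sum_le p he
    _ ≤ ∑ _i : Fin N, 1 := Finset.sum_le_sum fun i _ ↦
        length_span_singleton_le_one hss (hidem i) fun x ↦ (hrk i) ▸
          le_iSup (fun x : A ↦ (spectrum ℂ (x * p i) \ {0}).encard) x
    _ = N := by simp
end
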